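/- arXiv:2111.14835 — 3 statements merged into one kernel-verified Lean document; each statement's English description precedes it below -/
import Mathlib

section
/- Let T > 0 and let u, v : [0,1] × [0,T] → ℝ³ be two smooth solutions of the 1-dimensional Schrödinger flow with Neumann boundary conditions on [0,T]. If u(·,0) = v(·,0), then u = v on [0,1] × [0,T]. -/
open MeasureTheory Set

noncomputable section

abbrev E3 := EuclideanSpace ℝ (Fin 3)

/-- The cross product on `EuclideanSpace ℝ (Fin 3)`. -/
def cross3 (a b : E3) : E3 :=
  (WithLp.equiv 2 (Fin 3 → ℝ)).symm
    (crossProduct ((WithLp.equiv 2 (Fin 3 → ℝ)) a) ((WithLp.equiv 2 (Fin 3 → ℝ)) b))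

/-- Partial derivative in the space variable of `u = u x t`. -/
def pdx (u : ℝ → ℝ → E3) : ℝ → ℝ → E3 := fun x t => deriv (fun y => u y t) x

/-- Partial derivative in the time variable of `u = u x t`. -/
def pdt (u : ℝ → ℝ → E3) : ℝ → ℝ → E3 := fun x t => deriv (fun s => u x s) t

/-- `u` is a smooth solution of the 1-dimensional Schrödinger flow with Neumann
boundary conditions on `[0,1] × [0,T]`. -/
def IsSol (T : ℝ) (u : ℝ → ℝ → E3) : Prop :=
  ContDiff ℝ (⊤ : ℕ∞) (fun p : ℝ × ℝ => u p.1 p.2) ∧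
  (∀ x ∈ Icc (0:ℝ) 1, ∀ t ∈ Icc (0:ℝ) T, ‖u x t‖ = 1) ∧
  (∀ x ∈ Icc (0:ℝ) 1, ∀ t ∈ Icc (0:ℝ) T, pdt u x t = cross3 (u x t) (pdx (pdx u) x t)) ∧
  (∀ t ∈ Icc (0:ℝ) T, pdx u 0 t = 0 ∧ pdx u 1 t = 0)

/-- Squared `L²` norm on `[0,1]`. -/
def L2sq (f : ℝ → E3) : ℝ := ∫ x in (0:ℝ)..1, ‖f x‖ ^ 2

/-- Squared `H^k` Sobolev norm on `[0,1]`. -/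
def Hsq (k : ℕ) (f : ℝ → E3) : ℝ :=
  ∑ j ∈ Finset.range (k + 1), ∫ x in (0:ℝ)..1, ‖deriv^[j] f x‖ ^ 2

namespace SF

def Sm (f : ℝ → ℝ → ℝ) : Prop := ContDiff ℝ (⊤ : ℕ∞) (fun p : ℝ × ℝ => f p.1 p.2)
def Dx (f : ℝ → ℝ → ℝ) : ℝ → ℝ → ℝ := fun x t => deriv (fun y => f y t) x
def Dt (f : ℝ → ℝ → ℝ) : ℝ → ℝ → ℝ := fun x t => deriv (fun s => f x s) t

lemma Sm.diff {f : ℝ → ℝ → ℝ} (h : Sm f) : Differentiable ℝ (fun p : ℝ × ℝ => f p.1 p.2) :=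
  ContDiff.differentiable h (by simp)

lemma Sm.hx0 {f : ℝ → ℝ → ℝ} (h : Sm f) (x t : ℝ) :
    HasDerivAt (fun y => f y t) (fderiv ℝ (fun p : ℝ × ℝ => f p.1 p.2) (x, t) (1, 0)) x := by
  have h1 := (h.diff (x, t)).hasFDerivAt
  have h2 : HasDerivAt (fun y : ℝ => (y, t)) ((1 : ℝ), (0 : ℝ)) x :=
    (hasDerivAt_id x).prodMk (hasDerivAt_const x t)
  exact HasFDerivAt.comp_hasDerivAt (f := fun y : ℝ => (y, t)) x h1 h2

lemma Sm.ht0 {f : ℝ → ℝ → ℝ} (h : Sm f) (x t : ℝ) :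
    HasDerivAt (fun s => f x s) (fderiv ℝ (fun p : ℝ × ℝ => f p.1 p.2) (x, t) (0, 1)) t := by
  have h1 := (h.diff (x, t)).hasFDerivAt
  have h2 : HasDerivAt (fun s : ℝ => (x, s)) ((0 : ℝ), (1 : ℝ)) t :=
    (hasDerivAt_const t x).prodMk (hasDerivAt_id t)
  exact HasFDerivAt.comp_hasDerivAt (f := fun s : ℝ => (x, s)) t h1 h2

lemma Sm.hx {f : ℝ → ℝ → ℝ} (h : Sm f) (x t : ℝ) :
    HasDerivAt (fun y => f y t) (Dx f x t) x := (h.hx0 x t).differentiableAt.hasDerivAt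

lemma Sm.ht {f : ℝ → ℝ → ℝ} (h : Sm f) (x t : ℝ) :
    HasDerivAt (fun s => f x s) (Dt f x t) t := (h.ht0 x t).differentiableAt.hasDerivAt

lemma Sm.Dx_eq {f : ℝ → ℝ → ℝ} (h : Sm f) (x t : ℝ) :
    Dx f x t = fderiv ℝ (fun p : ℝ × ℝ => f p.1 p.2) (x, t) (1, 0) := (h.hx0 x t).deriv

lemma Sm.Dt_eq {f : ℝ → ℝ → ℝ} (h : Sm f) (x t : ℝ) :
    Dt f x t = fderiv ℝ (fun p : ℝ × ℝ => f p.1 p.2) (x, t) (0, 1) := (h.ht0 x t).deriv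

lemma Sm.fd {f : ℝ → ℝ → ℝ} (h : Sm f) :
    ContDiff ℝ (⊤ : ℕ∞) (fderiv ℝ (fun p : ℝ × ℝ => f p.1 p.2)) :=
  ContDiff.fderiv_right h (by simp)

lemma Sm.dx {f : ℝ → ℝ → ℝ} (h : Sm f) : Sm (Dx f) := by
  have : (fun p : ℝ × ℝ => Dx f p.1 p.2) =
      fun p => fderiv ℝ (fun p : ℝ × ℝ => f p.1 p.2) p (1, 0) := by
    funext p; exact h.Dx_eq p.1 p.2
  unfold Sm
  rw [this]
  exact h.fd.clm_apply contDiff_const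

lemma Sm.dt {f : ℝ → ℝ → ℝ} (h : Sm f) : Sm (Dt f) := by
  have : (fun p : ℝ × ℝ => Dt f p.1 p.2) =
      fun p => fderiv ℝ (fun p : ℝ × ℝ => f p.1 p.2) p (0, 1) := by
    funext p; exact h.Dt_eq p.1 p.2
  unfold Sm
  rw [this]
  exact h.fd.clm_apply contDiff_const

lemma Sm.comm {f : ℝ → ℝ → ℝ} (h : Sm f) (x t : ℝ) : Dt (Dx f) x t = Dx (Dt f) x t := by
  have hd := (h.fd.differentiable (by simp)) (x, t)
  have hs : IsSymmSndFDerivAt ℝ (fun p : ℝ × ℝ => f p.1 p.2) (x, t) :=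
    (ContDiff.contDiffAt h).isSymmSndFDerivAt (by
      simp only [minSmoothness_of_isRCLikeNormedField]
      exact WithTop.coe_le_coe.2 (le_top : (2 : ℕ∞) ≤ ⊤))
  rw [h.dx.Dt_eq, h.dt.Dx_eq]
  have e1 : (fun p : ℝ × ℝ => Dx f p.1 p.2) =
      fun p => fderiv ℝ (fun p : ℝ × ℝ => f p.1 p.2) p (1, 0) := by
    funext p; exact h.Dx_eq p.1 p.2
  have e2 : (fun p : ℝ × ℝ => Dt f p.1 p.2) =
      fun p => fderiv ℝ (fun p : ℝ × ℝ => f p.1 p.2) p (0, 1) := by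
    funext p; exact h.Dt_eq p.1 p.2
  rw [e1, e2, fderiv_clm_apply hd (differentiableAt_const _),
    fderiv_clm_apply hd (differentiableAt_const _)]
  simpa using hs.eq (0, 1) (1, 0)

lemma Sm.bdd {f : ℝ → ℝ → ℝ} (h : Sm f) (a b T : ℝ) :
    ∃ M : ℝ, 0 ≤ M ∧ ∀ x ∈ Icc (0:ℝ) 1, ∀ t ∈ Icc a b, |f x t| ≤ M := by
  obtain ⟨C, hC⟩ := (isCompact_Icc (a := (0:ℝ)) (b := 1)).prod
    (isCompact_Icc (a := a) (b := b)) |>.exists_bound_of_continuousOn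
      (ContDiff.continuous h).continuousOn
  refine ⟨|C|, abs_nonneg _, fun x hx t ht => ?_⟩
  exact (hC (x, t) ⟨hx, ht⟩).trans (le_abs_self C)

lemma Sm.cx {f : ℝ → ℝ → ℝ} (h : Sm f) (t : ℝ) : Continuous (fun x => f x t) :=
  (ContDiff.continuous h).comp (by fun_prop : Continuous (fun x : ℝ => (x, t)))

lemma Sm.integral {e : ℝ → ℝ → ℝ} (h : Sm e) (t : ℝ) :
    HasDerivAt (fun t => ∫ x in (0:ℝ)..1, e x t) (∫ x in (0:ℝ)..1, Dt e x t) t := by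
  obtain ⟨M, -, hM⟩ := h.dt.bdd (t - 1) (t + 1) 0
  refine (intervalIntegral.hasDerivAt_integral_of_dominated_loc_of_deriv_le
    (F := fun t x => e x t) (F' := fun t x => Dt e x t) (bound := fun _ => M)
    (s := Icc (t - 1) (t + 1)) (Icc_mem_nhds (by linarith) (by linarith))
    (Filter.Eventually.of_forall fun s => (h.cx s).aestronglyMeasurable)
    ((h.cx t).intervalIntegrable _ _) (h.dt.cx t).aestronglyMeasurable
    (Filter.Eventually.of_forall fun x hx s hs => ?_) (by simp)
    (Filter.Eventually.of_forall fun x hx s hs => h.ht x s)).2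
  rw [uIoc_of_le zero_le_one] at hx
  exact hM x ⟨hx.1.le, hx.2⟩ s hs

lemma triple {a0 a1 a2 b0 b1 b2 c0 c1 c2 M : ℝ} (h0 : |b0| ≤ M) (h1 : |b1| ≤ M) (h2 : |b2| ≤ M) :
    |b0 * (a1 * c2 - a2 * c1) + b1 * (a2 * c0 - a0 * c2) + b2 * (a0 * c1 - a1 * c0)| ≤
      M * (a0 ^ 2 + a1 ^ 2 + a2 ^ 2 + c0 ^ 2 + c1 ^ 2 + c2 ^ 2) := by
  have key : ∀ b p q r s : ℝ, |b| ≤ M →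
      |b * (p * q - r * s)| ≤ M * ((p ^ 2 + q ^ 2 + r ^ 2 + s ^ 2) / 2) := by
    intro b p q r s hb
    rw [abs_mul]
    have : |p * q - r * s| ≤ (p ^ 2 + q ^ 2 + r ^ 2 + s ^ 2) / 2 := by
      rw [abs_le]
      constructor <;> nlinarith [sq_nonneg (p + q), sq_nonneg (p - q), sq_nonneg (r + s),
        sq_nonneg (r - s)]
    exact mul_le_mul hb this (abs_nonneg _) ((abs_nonneg _).trans hb)
  have k0 := key b0 a1 c2 a2 c1 h0
  have k1 := key b1 a2 c0 a0 c2 h1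
  have k2 := key b2 a0 c1 a1 c0 h2
  have := abs_add_three (b0 * (a1 * c2 - a2 * c1)) (b1 * (a2 * c0 - a0 * c2))
    (b2 * (a0 * c1 - a1 * c0))
  linarith

lemma Sm.Dx_zero {f : ℝ → ℝ → ℝ} (h : Sm f) {t : ℝ} (h0 : ∀ x ∈ Icc (0:ℝ) 1, f x t = 0) :
    ∀ x ∈ Icc (0:ℝ) 1, Dx f x t = 0 := by
  intro x hx
  have h1 := (h.hx x t).hasDerivWithinAt (s := Icc (0:ℝ) 1)
  have h2 : HasDerivWithinAt (fun y => f y t) 0 (Icc (0:ℝ) 1) x :=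
    (hasDerivWithinAt_const x _ (0:ℝ)).congr h0 (h0 x hx)
  exact (uniqueDiffOn_Icc zero_lt_one x hx).eq_deriv _ h1 h2

theorem core (T : ℝ) {u0 u1 u2 v0 v1 v2 w0 w1 w2 : ℝ → ℝ → ℝ}
    (hu0 : Sm u0) (hu1 : Sm u1) (hu2 : Sm u2) (hv0 : Sm v0) (hv1 : Sm v1) (hv2 : Sm v2)
    (hw0 : Sm w0) (hw1 : Sm w1) (hw2 : Sm w2)
    (q0 : ∀ x ∈ Icc (0:ℝ) 1, ∀ t ∈ Icc (0:ℝ) T, Dt w0 x t =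
      u1 x t * Dx (Dx w2) x t - u2 x t * Dx (Dx w1) x t
      + (w1 x t * Dx (Dx v2) x t - w2 x t * Dx (Dx v1) x t))
    (q1 : ∀ x ∈ Icc (0:ℝ) 1, ∀ t ∈ Icc (0:ℝ) T, Dt w1 x t =
      u2 x t * Dx (Dx w0) x t - u0 x t * Dx (Dx w2) x t
      + (w2 x t * Dx (Dx v0) x t - w0 x t * Dx (Dx v2) x t))
    (q2 : ∀ x ∈ Icc (0:ℝ) 1, ∀ t ∈ Icc (0:ℝ) T, Dt w2 x t =
      u0 x t * Dx (Dx w1) x t - u1 x t * Dx (Dx w0) x t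
      + (w0 x t * Dx (Dx v1) x t - w1 x t * Dx (Dx v0) x t))
    (n0 : ∀ t ∈ Icc (0:ℝ) T, Dx w0 0 t = 0 ∧ Dx w0 1 t = 0)
    (n1 : ∀ t ∈ Icc (0:ℝ) T, Dx w1 0 t = 0 ∧ Dx w1 1 t = 0)
    (n2 : ∀ t ∈ Icc (0:ℝ) T, Dx w2 0 t = 0 ∧ Dx w2 1 t = 0)
    (i0 : ∀ x ∈ Icc (0:ℝ) 1, w0 x 0 = 0) (i1 : ∀ x ∈ Icc (0:ℝ) 1, w1 x 0 = 0)
    (i2 : ∀ x ∈ Icc (0:ℝ) 1, w2 x 0 = 0) :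
    ∀ x ∈ Icc (0:ℝ) 1, ∀ t ∈ Icc (0:ℝ) T, w0 x t = 0 ∧ w1 x t = 0 ∧ w2 x t = 0 := by
  set e : ℝ → ℝ → ℝ := fun x t => w0 x t ^ 2 + w1 x t ^ 2 + w2 x t ^ 2
    + Dx w0 x t ^ 2 + Dx w1 x t ^ 2 + Dx w2 x t ^ 2 with he
  have hx0 := hw0.dx
  have hx1 := hw1.dx
  have hx2 := hw2.dx
  have hse : Sm e := by
    unfold Sm at *
    simp only [he]
    fun_prop
  have het : ∀ x t, Dt e x t = 2 * (w0 x t * Dt w0 x t + w1 x t * Dt w1 x t + w2 x t * Dt w2 x t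
      + Dx w0 x t * Dx (Dt w0) x t + Dx w1 x t * Dx (Dt w1) x t + Dx w2 x t * Dx (Dt w2) x t) := by
    intro x t
    have := ((((((hw0.ht x t).fun_pow 2).fun_add ((hw1.ht x t).fun_pow 2)).fun_add
      ((hw2.ht x t).fun_pow 2)).fun_add
      ((hx0.ht x t).fun_pow 2)).fun_add ((hx1.ht x t).fun_pow 2)).fun_add ((hx2.ht x t).fun_pow 2)
    rw [hw0.comm, hw1.comm, hw2.comm] at this
    refine this.deriv.trans ?_
    norm_num
    ring
  obtain ⟨M1, p1, b1⟩ := hu0.dx.bdd 0 T 0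
  obtain ⟨M2, p2, b2⟩ := hu1.dx.bdd 0 T 0
  obtain ⟨M3, p3, b3⟩ := hu2.dx.bdd 0 T 0
  obtain ⟨M4, p4, b4⟩ := hv0.dx.dx.dx.bdd 0 T 0
  obtain ⟨M5, p5, b5⟩ := hv1.dx.dx.dx.bdd 0 T 0
  obtain ⟨M6, p6, b6⟩ := hv2.dx.dx.dx.bdd 0 T 0
  set M := M1 + M2 + M3 + M4 + M5 + M6 with hM
  have bound : ∀ t ∈ Icc (0:ℝ) T, ‖∫ x in (0:ℝ)..1, Dt e x t‖ ≤
      (4 * M) * ‖∫ x in (0:ℝ)..1, e x t‖ := by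
    intro t ht
    set R : ℝ → ℝ := fun x =>
      (Dx (Dx (Dx v0)) x t * (Dx w1 x t * w2 x t - Dx w2 x t * w1 x t)
        + Dx (Dx (Dx v1)) x t * (Dx w2 x t * w0 x t - Dx w0 x t * w2 x t)
        + Dx (Dx (Dx v2)) x t * (Dx w0 x t * w1 x t - Dx w1 x t * w0 x t))
      + (Dx u0 x t * (w1 x t * Dx w2 x t - w2 x t * Dx w1 x t)
        + Dx u1 x t * (w2 x t * Dx w0 x t - w0 x t * Dx w2 x t)
        + Dx u2 x t * (w0 x t * Dx w1 x t - w1 x t * Dx w0 x t)) with hR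
    have hRb : ∀ x ∈ Icc (0:ℝ) 1, |2 * R x| ≤ 4 * M * e x t := by
      intro x hx
      have t1 := triple (M := M) (a0 := Dx w0 x t) (a1 := Dx w1 x t) (a2 := Dx w2 x t)
        (c0 := w0 x t) (c1 := w1 x t) (c2 := w2 x t)
        ((b4 x hx t ht).trans (by linarith)) ((b5 x hx t ht).trans (by linarith))
        ((b6 x hx t ht).trans (by linarith))
      have t2 := triple (M := M) (c0 := Dx w0 x t) (c1 := Dx w1 x t) (c2 := Dx w2 x t)
        (a0 := w0 x t) (a1 := w1 x t) (a2 := w2 x t)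
        ((b1 x hx t ht).trans (by linarith)) ((b2 x hx t ht).trans (by linarith))
        ((b3 x hx t ht).trans (by linarith))
      have t3 := (abs_add_le _ _).trans (add_le_add t1 t2)
      rw [abs_mul, abs_of_pos (zero_lt_two)]
      simp only [hR, he]
      linarith
    set F : ℝ → ℝ := fun x =>
      (Dx w0 x t * Dt w0 x t + Dx w1 x t * Dt w1 x t + Dx w2 x t * Dt w2 x t)
      + (w0 x t * (u1 x t * Dx w2 x t - u2 x t * Dx w1 x t)
        + w1 x t * (u2 x t * Dx w0 x t - u0 x t * Dx w2 x t)
        + w2 x t * (u0 x t * Dx w1 x t - u1 x t * Dx w0 x t))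
      - (Dx w0 x t * (w1 x t * Dx (Dx v2) x t - w2 x t * Dx (Dx v1) x t)
        + Dx w1 x t * (w2 x t * Dx (Dx v0) x t - w0 x t * Dx (Dx v2) x t)
        + Dx w2 x t * (w0 x t * Dx (Dx v1) x t - w1 x t * Dx (Dx v0) x t)) with hF
    have hFd : ∀ x ∈ Icc (0:ℝ) 1, HasDerivAt (fun x => 2 * F x) (Dt e x t - 2 * R x) x := by
      intro x hx
      have A0 := hw0.hx x t
      have A1 := hw1.hx x t
      have A2 := hw2.hx x t
      have B0 := hx0.hx x t
      have B1 := hx1.hx x t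
      have B2 := hx2.hx x t
      have C0 := hw0.dt.hx x t
      have C1 := hw1.dt.hx x t
      have C2 := hw2.dt.hx x t
      have U0 := hu0.hx x t
      have U1 := hu1.hx x t
      have U2 := hu2.hx x t
      have V0 := hv0.dx.dx.hx x t
      have V1 := hv1.dx.dx.hx x t
      have V2 := hv2.dx.dx.hx x t
      have D1 := ((B0.fun_mul C0).fun_add (B1.fun_mul C1)).fun_add (B2.fun_mul C2)
      have D2 := ((A0.fun_mul ((U1.fun_mul B2).fun_sub (U2.fun_mul B1))).fun_add
        (A1.fun_mul ((U2.fun_mul B0).fun_sub (U0.fun_mul B2)))).fun_add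
        (A2.fun_mul ((U0.fun_mul B1).fun_sub (U1.fun_mul B0)))
      have D3 := ((B0.fun_mul ((A1.fun_mul V2).fun_sub (A2.fun_mul V1))).fun_add
        (B1.fun_mul ((A2.fun_mul V0).fun_sub (A0.fun_mul V2)))).fun_add
        (B2.fun_mul ((A0.fun_mul V1).fun_sub (A1.fun_mul V0)))
      have D := ((D1.fun_add D2).fun_sub D3).const_mul 2
      refine D.congr_deriv ?_
      rw [het]
      simp only [hR]
      linear_combination 2 * (Dx (Dx w0) x t - w0 x t) * q0 x hx t ht
        + 2 * (Dx (Dx w1) x t - w1 x t) * q1 x hx t ht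
        + 2 * (Dx (Dx w2) x t - w2 x t) * q2 x hx t ht
    obtain ⟨n00, n01⟩ := n0 t ht
    obtain ⟨n10, n11⟩ := n1 t ht
    obtain ⟨n20, n21⟩ := n2 t ht
    have hRc : Continuous R := by
      have := hw0.cx t
      have := hw1.cx t
      have := hw2.cx t
      have := hx0.cx t
      have := hx1.cx t
      have := hx2.cx t
      have := hu0.dx.cx t
      have := hu1.dx.cx t
      have := hu2.dx.cx t
      have := hv0.dx.dx.dx.cx t
      have := hv1.dx.dx.dx.cx t
      have := hv2.dx.dx.dx.cx t
      simp only [hR]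
      fun_prop
    have hRc2 : Continuous (fun x => 2 * R x) := continuous_const.mul hRc
    have hint : ∫ x in (0:ℝ)..1, (Dt e x t - 2 * R x) = 0 := by
      rw [intervalIntegral.integral_eq_sub_of_hasDerivAt (f := fun x => 2 * F x)]
      · simp [hF, n00, n01, n10, n11, n20, n21]
      · intro x hx
        rw [uIcc_of_le zero_le_one] at hx
        exact hFd x hx
      · exact ((hse.dt.cx t).sub hRc2).intervalIntegrable _ _
    rw [intervalIntegral.integral_sub ((hse.dt.cx t).intervalIntegrable _ _)
      (hRc2.intervalIntegrable _ _), sub_eq_zero] at hint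
    rw [hint, Real.norm_eq_abs, Real.norm_eq_abs]
    calc |∫ x in (0:ℝ)..1, 2 * R x| ≤ ∫ x in (0:ℝ)..1, |2 * R x| :=
          intervalIntegral.abs_integral_le_integral_abs zero_le_one
      _ ≤ ∫ x in (0:ℝ)..1, 4 * M * e x t :=
          intervalIntegral.integral_mono_on zero_le_one (hRc2.abs.intervalIntegrable _ _)
            ((continuous_const.mul (hse.cx t)).intervalIntegrable _ _) hRb
      _ = 4 * M * ∫ x in (0:ℝ)..1, e x t := intervalIntegral.integral_const_mul _ _
      _ ≤ _ := mul_le_mul_of_nonneg_left (le_abs_self _) (by positivity)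
  have hE0 : ∫ x in (0:ℝ)..1, e x 0 = 0 := by
    rw [intervalIntegral.integral_congr (g := fun _ => (0:ℝ))]
    · simp
    · intro x hx
      rw [uIcc_of_le zero_le_one] at hx
      simp [he, i0 x hx, i1 x hx, i2 x hx, hw0.Dx_zero i0 x hx, hw1.Dx_zero i1 x hx,
        hw2.Dx_zero i2 x hx]
  have hE := eq_zero_of_abs_deriv_le_mul_abs_self_of_eq_zero_right
    (f := fun t => ∫ x in (0:ℝ)..1, e x t) (f' := fun t => ∫ x in (0:ℝ)..1, Dt e x t)
    (K := 4 * M) (a := 0) (b := T)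
    (fun t _ => (hse.integral t).continuousAt.continuousWithinAt)
    (fun t _ => (hse.integral t).hasDerivWithinAt) hE0
    (fun t ht => bound t ⟨ht.1, ht.2.le⟩)
  intro x hx t ht
  have hen : ∀ x, 0 ≤ e x t := fun x => by simp only [he]; positivity
  have hex : e x t = 0 := by
    by_contra hne
    have := intervalIntegral.integral_pos zero_lt_one (hse.cx t).continuousOn
      (fun x _ => hen x) ⟨x, hx, lt_of_le_of_ne (hen x) (Ne.symm hne)⟩
    exact this.ne' (hE t ht)
  simp only [he] at hex
  have := sq_nonneg (w0 x t)
  have := sq_nonneg (w1 x t)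
  have := sq_nonneg (w2 x t)
  have := sq_nonneg (Dx w0 x t)
  have := sq_nonneg (Dx w1 x t)
  have := sq_nonneg (Dx w2 x t)
  refine ⟨pow_eq_zero_iff two_ne_zero |>.1 ?_, pow_eq_zero_iff two_ne_zero |>.1 ?_,
    pow_eq_zero_iff two_ne_zero |>.1 ?_⟩ <;> linarith

def cp (u : ℝ → ℝ → E3) (i : Fin 3) : ℝ → ℝ → ℝ := fun x t => u x t i

lemma sm_cp {u : ℝ → ℝ → E3} (h : ContDiff ℝ (⊤ : ℕ∞) (fun p : ℝ × ℝ => u p.1 p.2)) (i : Fin 3) :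
    Sm (cp u i) :=
  (EuclideanSpace.proj (𝕜 := ℝ) i : E3 →L[ℝ] ℝ).contDiff.comp h

lemma deriv_cp {f : ℝ → E3} {x : ℝ} (h : DifferentiableAt ℝ f x) (i : Fin 3) :
    deriv (fun y => f y i) x = deriv f x i :=
  ((EuclideanSpace.proj (𝕜 := ℝ) i : E3 →L[ℝ] ℝ).hasFDerivAt.comp_hasDerivAt x h.hasDerivAt).deriv

lemma smooth_pdx {u : ℝ → ℝ → E3} (h : ContDiff ℝ (⊤ : ℕ∞) (fun p : ℝ × ℝ => u p.1 p.2)) :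
    ContDiff ℝ (⊤ : ℕ∞) (fun p : ℝ × ℝ => pdx u p.1 p.2) := by
  have : (fun p : ℝ × ℝ => pdx u p.1 p.2) =
      fun p => fderiv ℝ (fun p : ℝ × ℝ => u p.1 p.2) p (1, 0) := by
    funext p
    have h1 := ((h.differentiable (by simp)) p).hasFDerivAt
    have h2 : HasDerivAt (fun y : ℝ => (y, p.2)) ((1 : ℝ), (0 : ℝ)) p.1 :=
      (hasDerivAt_id p.1).prodMk (hasDerivAt_const p.1 p.2)
    exact (HasFDerivAt.comp_hasDerivAt (f := fun y : ℝ => (y, p.2)) p.1 h1 h2).deriv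
  rw [this]
  exact (h.fderiv_right (m := (⊤ : ℕ∞)) (by simp)).clm_apply contDiff_const

lemma Dx_cp {u : ℝ → ℝ → E3} (h : ContDiff ℝ (⊤ : ℕ∞) (fun p : ℝ × ℝ => u p.1 p.2)) (i : Fin 3) :
    Dx (cp u i) = cp (pdx u) i := by
  funext x t
  exact deriv_cp (f := fun y => u y t)
    ((h.differentiable (by simp)).comp (by fun_prop : Differentiable ℝ (fun y : ℝ => (y, t))) x) i

lemma Dt_cp {u : ℝ → ℝ → E3} (h : ContDiff ℝ (⊤ : ℕ∞) (fun p : ℝ × ℝ => u p.1 p.2)) (i : Fin 3) :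
    Dt (cp u i) = cp (pdt u) i := by
  funext x t
  exact deriv_cp (f := fun y => u x y)
    ((h.differentiable (by simp)).comp (by fun_prop : Differentiable ℝ (fun y : ℝ => (x, y))) t) i

def sb (f g : ℝ → ℝ → ℝ) : ℝ → ℝ → ℝ := fun x t => f x t - g x t

lemma Sm.sb {f g : ℝ → ℝ → ℝ} (hf : Sm f) (hg : Sm g) : Sm (sb f g) := ContDiff.sub hf hg

lemma Dx_sb {f g : ℝ → ℝ → ℝ} (hf : Sm f) (hg : Sm g) : Dx (sb f g) = sb (Dx f) (Dx g) := by
  funext x t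
  exact ((hf.hx x t).fun_sub (hg.hx x t)).deriv

lemma Dt_sb {f g : ℝ → ℝ → ℝ} (hf : Sm f) (hg : Sm g) : Dt (sb f g) = sb (Dt f) (Dt g) := by
  funext x t
  exact ((hf.ht x t).fun_sub (hg.ht x t)).deriv

lemma sol_eqs {T : ℝ} {u : ℝ → ℝ → E3} (hu : IsSol T u) :
    ∀ x ∈ Icc (0:ℝ) 1, ∀ t ∈ Icc (0:ℝ) T,
      (Dt (cp u 0) x t = cp u 1 x t * Dx (Dx (cp u 2)) x t - cp u 2 x t * Dx (Dx (cp u 1)) x t) ∧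
      (Dt (cp u 1) x t = cp u 2 x t * Dx (Dx (cp u 0)) x t - cp u 0 x t * Dx (Dx (cp u 2)) x t) ∧
      (Dt (cp u 2) x t = cp u 0 x t * Dx (Dx (cp u 1)) x t - cp u 1 x t * Dx (Dx (cp u 0)) x t) := by
  obtain ⟨h1, -, h3, -⟩ := hu
  intro x hx t ht
  have h := h3 x hx t ht
  simp only [Dt_cp h1, Dx_cp h1, Dx_cp (smooth_pdx h1)]
  simp only [cp, h]
  simp [cross3, cross_apply]

lemma sol_bd {T : ℝ} {u : ℝ → ℝ → E3} (hu : IsSol T u) (i : Fin 3) :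
    ∀ t ∈ Icc (0:ℝ) T, Dx (cp u i) 0 t = 0 ∧ Dx (cp u i) 1 t = 0 := by
  obtain ⟨h1, -, -, h4⟩ := hu
  intro t ht
  rw [Dx_cp h1]
  simp [cp, h4 t ht]

end SF

open SF


theorem uniqueness_schrodinger_flow
    (T : ℝ) (hT : 0 < T) (u v : ℝ → ℝ → E3)
    (hu : IsSol T u) (hv : IsSol T v)
    (h0 : ∀ x ∈ Icc (0:ℝ) 1, u x 0 = v x 0) :
    ∀ x ∈ Icc (0:ℝ) 1, ∀ t ∈ Icc (0:ℝ) T, u x t = v x t := by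
  have su := sm_cp hu.1
  have sv := sm_cp hv.1
  have sw : ∀ i, Sm (sb (cp u i) (cp v i)) := fun i => (su i).sb (sv i)
  have nb : ∀ i, ∀ t ∈ Icc (0:ℝ) T, Dx (sb (cp u i) (cp v i)) 0 t = 0 ∧
      Dx (sb (cp u i) (cp v i)) 1 t = 0 := by
    intro i t ht
    rw [Dx_sb (su i) (sv i)]
    simp [sb, sol_bd hu i t ht, sol_bd hv i t ht]
  have ini : ∀ i, ∀ x ∈ Icc (0:ℝ) 1, sb (cp u i) (cp v i) x 0 = 0 := by
    intro i x hx
    simp [sb, cp, h0 x hx]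
  have hdd : ∀ i, Dx (Dx (sb (cp u i) (cp v i))) = sb (Dx (Dx (cp u i))) (Dx (Dx (cp v i))) := by
    intro i
    rw [Dx_sb (su i) (sv i), Dx_sb (su i).dx (sv i).dx]
  have key := core T (su 0) (su 1) (su 2) (sv 0) (sv 1) (sv 2) (sw 0) (sw 1) (sw 2)
    (fun x hx t ht => by
      rw [Dt_sb (su 0) (sv 0), hdd, hdd]
      simp only [sb]
      linear_combination (sol_eqs hu x hx t ht).1 - (sol_eqs hv x hx t ht).1)
    (fun x hx t ht => by
      rw [Dt_sb (su 1) (sv 1), hdd, hdd]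
      simp only [sb]
      linear_combination (sol_eqs hu x hx t ht).2.1 - (sol_eqs hv x hx t ht).2.1)
    (fun x hx t ht => by
      rw [Dt_sb (su 2) (sv 2), hdd, hdd]
      simp only [sb]
      linear_combination (sol_eqs hu x hx t ht).2.2 - (sol_eqs hv x hx t ht).2.2)
    (nb 0) (nb 1) (nb 2) (ini 0) (ini 1) (ini 2)
  intro x hx t ht
  obtain ⟨k0, k1, k2⟩ := key x hx t ht
  simp only [sb, cp, sub_eq_zero] at k0 k1 k2
  ext i
  fin_cases i
  · exact k0
  · exact k1
  · exact k2

end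
end

section
/- Let u be a smooth solution of the 1-dimensional Schrödinger flow with Neumann boundary conditions on [0,T]. Then for every t ∈ [0,T], (d/dt) ∫₀¹ |∂_x u(x,t)|² dx = 0; equivalently, ∫₀¹ |∂_x u(x,t)|² dx = ∫₀¹ |∂_x u(x,0)|² dx for all t ∈ [0,T]. -/
open MeasureTheory Set

noncomputable section

lemma hasDerivAt_x {u : ℝ → ℝ → E3} (hu : ContDiff ℝ (⊤ : ℕ∞) (fun p : ℝ × ℝ => u p.1 p.2))
    (x t : ℝ) : HasDerivAt (fun y => u y t)
      (fderiv ℝ (fun p : ℝ × ℝ => u p.1 p.2) (x, t) (1, 0)) x := by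
  have h1 : HasFDerivAt (fun p : ℝ × ℝ => u p.1 p.2)
      (fderiv ℝ (fun p : ℝ × ℝ => u p.1 p.2) (x, t)) (x, t) :=
    (hu.differentiable (by simp) (x, t)).hasFDerivAt
  have h2 : HasDerivAt (fun y : ℝ => (y, t)) ((1 : ℝ), (0 : ℝ)) x :=
    (hasDerivAt_id x).prodMk (hasDerivAt_const x t)
  exact h1.comp_hasDerivAt x h2

lemma hasDerivAt_t {u : ℝ → ℝ → E3} (hu : ContDiff ℝ (⊤ : ℕ∞) (fun p : ℝ × ℝ => u p.1 p.2))
    (x t : ℝ) : HasDerivAt (fun s => u x s)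
      (fderiv ℝ (fun p : ℝ × ℝ => u p.1 p.2) (x, t) (0, 1)) t := by
  have h1 : HasFDerivAt (fun p : ℝ × ℝ => u p.1 p.2)
      (fderiv ℝ (fun p : ℝ × ℝ => u p.1 p.2) (x, t)) (x, t) :=
    (hu.differentiable (by simp) (x, t)).hasFDerivAt
  have h2 : HasDerivAt (fun y : ℝ => (x, y)) ((0 : ℝ), (1 : ℝ)) t :=
    (hasDerivAt_const t x).prodMk (hasDerivAt_id t)
  exact h1.comp_hasDerivAt t h2

lemma pdx_eq {u : ℝ → ℝ → E3} (hu : ContDiff ℝ (⊤ : ℕ∞) (fun p : ℝ × ℝ => u p.1 p.2))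
    (x t : ℝ) : pdx u x t = fderiv ℝ (fun p : ℝ × ℝ => u p.1 p.2) (x, t) (1, 0) :=
  (hasDerivAt_x hu x t).deriv

lemma pdt_eq {u : ℝ → ℝ → E3} (hu : ContDiff ℝ (⊤ : ℕ∞) (fun p : ℝ × ℝ => u p.1 p.2))
    (x t : ℝ) : pdt u x t = fderiv ℝ (fun p : ℝ × ℝ => u p.1 p.2) (x, t) (0, 1) :=
  (hasDerivAt_t hu x t).deriv

lemma contDiff_fd {u : ℝ → ℝ → E3} (hu : ContDiff ℝ (⊤ : ℕ∞) (fun p : ℝ × ℝ => u p.1 p.2)) :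
    ContDiff ℝ (⊤ : ℕ∞) (fderiv ℝ (fun p : ℝ × ℝ => u p.1 p.2)) :=
  hu.fderiv_right (by simp)

lemma contDiff_pdx {u : ℝ → ℝ → E3} (hu : ContDiff ℝ (⊤ : ℕ∞) (fun p : ℝ × ℝ => u p.1 p.2)) :
    ContDiff ℝ (⊤ : ℕ∞) (fun p : ℝ × ℝ => pdx u p.1 p.2) := by
  simp only [pdx_eq hu]
  exact (contDiff_fd hu).clm_apply contDiff_const

lemma contDiff_pdt {u : ℝ → ℝ → E3} (hu : ContDiff ℝ (⊤ : ℕ∞) (fun p : ℝ × ℝ => u p.1 p.2)) :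
    ContDiff ℝ (⊤ : ℕ∞) (fun p : ℝ × ℝ => pdt u p.1 p.2) := by
  simp only [pdt_eq hu]
  exact (contDiff_fd hu).clm_apply contDiff_const

lemma pd_comm {u : ℝ → ℝ → E3} (hu : ContDiff ℝ (⊤ : ℕ∞) (fun p : ℝ × ℝ => u p.1 p.2))
    (x t : ℝ) : pdt (pdx u) x t = pdx (pdt u) x t := by
  have hd : DifferentiableAt ℝ (fderiv ℝ (fun p : ℝ × ℝ => u p.1 p.2)) (x, t) :=
    (contDiff_fd hu).differentiable (by simp) (x, t)
  rw [pdt_eq (contDiff_pdx hu), pdx_eq (contDiff_pdt hu)]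
  simp only [pdx_eq hu, pdt_eq hu]
  have hs : IsSymmSndFDerivAt ℝ (fun p : ℝ × ℝ => u p.1 p.2) (x, t) :=
    hu.contDiffAt.isSymmSndFDerivAt (by simp; exact WithTop.coe_le_coe.2 (le_top : (2:ℕ∞) ≤ ⊤))
  rw [fderiv_clm_apply hd (by fun_prop), fderiv_clm_apply hd (by fun_prop)]
  simpa using hs (0, 1) (1, 0)

lemma inner_cross (a b : E3) : inner ℝ b (cross3 a b) = 0 := by
  simp [cross3, PiLp.inner_apply, Fin.sum_univ_three, crossProduct]
  ring

lemma energy_hasDeriv {v : ℝ → ℝ → E3} (hv : ContDiff ℝ (⊤ : ℕ∞) (fun p : ℝ × ℝ => v p.1 p.2))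
    (t : ℝ) : HasDerivAt (fun s => ∫ x in (0:ℝ)..1, ‖v x s‖ ^ 2)
      (∫ x in (0:ℝ)..1, 2 * inner ℝ (v x t) (pdt v x t)) t := by
  have c1 : Continuous (fun p : ℝ × ℝ => v p.1 p.2) := hv.continuous
  have c2 : Continuous (fun p : ℝ × ℝ => pdt v p.1 p.2) := (contDiff_pdt hv).continuous
  have c3 : Continuous (fun p : ℝ × ℝ => 2 * inner ℝ (v p.1 p.2) (pdt v p.1 p.2)) :=
    continuous_const.mul (c1.inner c2)
  obtain ⟨C, hC⟩ := ((isCompact_Icc (a := (0:ℝ)) (b := 1)).prod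
    (isCompact_Icc (a := t - 1) (b := t + 1))).exists_bound_of_continuousOn c3.continuousOn
  have e1 : ∀ s, Continuous (fun x => ‖v x s‖ ^ 2) := fun s =>
    ((c1.comp (by fun_prop : Continuous fun x : ℝ => (x, s))).norm).pow 2
  have e2 : Continuous (fun x => 2 * inner ℝ (v x t) (pdt v x t)) :=
    c3.comp (by fun_prop : Continuous fun x : ℝ => (x, t))
  refine (intervalIntegral.hasDerivAt_integral_of_dominated_loc_of_deriv_le
    (F := fun s x => ‖v x s‖ ^ 2) (F' := fun s x => 2 * inner ℝ (v x s) (pdt v x s))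
    (bound := fun _ => C) (s := Icc (t - 1) (t + 1))
    (Icc_mem_nhds (by linarith) (by linarith)) ?_ ?_ ?_ ?_ ?_ ?_).2
  · exact Filter.Eventually.of_forall fun s => (e1 s).aestronglyMeasurable
  · exact (e1 t).intervalIntegrable _ _
  · exact e2.aestronglyMeasurable
  · refine Filter.Eventually.of_forall fun x hx s hs => ?_
    rw [uIoc_of_le zero_le_one] at hx
    exact hC (x, s) ⟨⟨hx.1.le, hx.2⟩, hs⟩
  · exact intervalIntegrable_const
  · refine Filter.Eventually.of_forall fun x _ s _ => ?_
    have := hasDerivAt_t hv x s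
    rw [← pdt_eq hv] at this
    exact this.norm_sq

lemma energy_deriv_zero {T : ℝ} {u : ℝ → ℝ → E3} (hu : IsSol T u) {t : ℝ} (ht : t ∈ Icc (0:ℝ) T) :
    HasDerivAt (fun s => ∫ x in (0:ℝ)..1, ‖pdx u x s‖ ^ 2) 0 t := by
  obtain ⟨hs, -, heq, hb⟩ := hu
  have hv := contDiff_pdx hs
  have hw := contDiff_pdt hs
  convert energy_hasDeriv hv t using 1
  have ci : Continuous (fun x : ℝ => (x, t)) := by fun_prop
  have c : Continuous (fun x => inner ℝ (pdx u x t) (pdx (pdt u) x t)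
      + inner ℝ (pdx (pdx u) x t) (pdt u x t)) :=
    ((hv.continuous.comp ci).inner ((contDiff_pdx hw).continuous.comp ci)).add
      (((contDiff_pdx hv).continuous.comp ci).inner (hw.continuous.comp ci))
  have h := intervalIntegral.integral_eq_sub_of_hasDerivAt (a := 0) (b := 1)
    (f := fun x => inner ℝ (pdx u x t) (pdt u x t))
    (f' := fun x => inner ℝ (pdx u x t) (pdx (pdt u) x t)
      + inner ℝ (pdx (pdx u) x t) (pdt u x t))
    (fun x _ => by
      have h1 := hasDerivAt_x hv x t
      have h2 := hasDerivAt_x hw x t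
      rw [← pdx_eq hv] at h1
      rw [← pdx_eq hw] at h2
      exact h1.inner ℝ h2) (c.intervalIntegrable _ _)
  simp only [(hb t ht).1, (hb t ht).2, inner_zero_left, sub_zero] at h
  rw [intervalIntegral.integral_const_mul]
  symm
  refine mul_eq_zero_of_right _ (Eq.trans ?_ h)
  apply intervalIntegral.integral_congr
  intro x hx
  rw [uIcc_of_le zero_le_one] at hx
  simp only [pd_comm hs, heq x hx t ht, inner_cross, add_zero]

theorem energy_conservation_schrodinger_flow
    (T : ℝ) (hT : 0 < T) (u : ℝ → ℝ → E3) (hu : IsSol T u) :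
    ∀ t ∈ Icc (0:ℝ) T,
      deriv (fun s => ∫ x in (0:ℝ)..1, ‖pdx u x s‖ ^ 2) t = 0 ∧
      (∫ x in (0:ℝ)..1, ‖pdx u x t‖ ^ 2) = ∫ x in (0:ℝ)..1, ‖pdx u x 0‖ ^ 2 := by
  intro t ht
  refine ⟨(energy_deriv_zero hu ht).deriv, ?_⟩
  exact constant_of_has_deriv_right_zero
    (f := fun s => ∫ x in (0:ℝ)..1, ‖pdx u x s‖ ^ 2)
    (fun s hs => (energy_deriv_zero hu hs).continuousAt.continuousWithinAt)
    (fun s hs => (energy_deriv_zero hu (Ico_subset_Icc_self hs)).hasDerivWithinAt) t ht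

end
end

section
/- Let u be a smooth solution of the 1-dimensional Schrödinger flow with Neumann boundary conditions on [0,T]. Then for every t ∈ [0,T], ∫₀¹ |∂_x²u(x,t)|² dx = ∫₀¹ |∂_t u(x,t)|² dx + ∫₀¹ |∂_x u(x,t)|⁴ dx. -/
open MeasureTheory Set

noncomputable section

theorem norm_sq_cross3 (a b : E3) :
    ‖cross3 a b‖ ^ 2 = ‖a‖ ^ 2 * ‖b‖ ^ 2 - (inner ℝ a b) ^ 2 := by
  simp only [EuclideanSpace.norm_sq_eq, PiLp.inner_apply, Fin.sum_univ_three, cross3,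
    crossProduct, Real.norm_eq_abs, sq_abs]
  simp
  ring

theorem uxx_L2_identity_schrodinger_flow
    (T : ℝ) (hT : 0 < T) (u : ℝ → ℝ → E3) (hu : IsSol T u) :
    ∀ t ∈ Icc (0:ℝ) T,
      (∫ x in (0:ℝ)..1, ‖pdx (pdx u) x t‖ ^ 2)
        = (∫ x in (0:ℝ)..1, ‖pdt u x t‖ ^ 2) + ∫ x in (0:ℝ)..1, ‖pdx u x t‖ ^ 4 := by
  intro t ht
  obtain ⟨hs, hn, he, -⟩ := hu
  have hv : ContDiff ℝ (⊤ : ℕ∞) (fun y => u y t) :=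
    hs.comp (contDiff_id.prodMk contDiff_const)
  have hv1 : ContDiff ℝ (⊤ : ℕ∞) (fun y => pdx u y t) :=
    (contDiff_infty_iff_deriv.1 hv).2
  have hv2 : ContDiff ℝ (⊤ : ℕ∞) (fun y => pdx (pdx u) y t) :=
    (contDiff_infty_iff_deriv.1 hv1).2
  have d1 : ∀ x, HasDerivAt (fun y => u y t) (pdx u x t) x := fun x =>
    ((contDiff_infty_iff_deriv.1 hv).1 x).hasDerivAt
  have d2 : ∀ x, HasDerivAt (fun y => pdx u y t) (pdx (pdx u) x t) x := fun x =>
    ((contDiff_infty_iff_deriv.1 hv1).1 x).hasDerivAt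
  have k1 : ∀ x ∈ Ioo (0:ℝ) 1, inner ℝ (u x t) (pdx u x t) = 0 := by
    intro x hx
    have h1 := (d1 x).inner ℝ (d1 x)
    have h2 : (fun y => inner ℝ (u y t) (u y t)) =ᶠ[nhds x] fun _ => (1:ℝ) := by
      filter_upwards [isOpen_Ioo.mem_nhds hx] with y hy
      rw [real_inner_self_eq_norm_sq, hn y (Ioo_subset_Icc_self hy) t ht]; norm_num
    have h3 := h1.unique ((hasDerivAt_const x (1:ℝ)).congr_of_eventuallyEq h2)
    rw [real_inner_comm (u x t) (pdx u x t)] at h3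
    linarith
  have k2 : ∀ x ∈ Ioo (0:ℝ) 1, inner ℝ (u x t) (pdx (pdx u) x t) = - ‖pdx u x t‖ ^ 2 := by
    intro x hx
    have h1 := (d1 x).inner ℝ (d2 x)
    have h2 : (fun y => inner ℝ (u y t) (pdx u y t)) =ᶠ[nhds x] fun _ => (0:ℝ) := by
      filter_upwards [isOpen_Ioo.mem_nhds hx] with y hy
      exact k1 y hy
    have h3 := h1.unique ((hasDerivAt_const x (0:ℝ)).congr_of_eventuallyEq h2)
    rw [real_inner_self_eq_norm_sq] at h3
    linarith
  have c2 : Continuous (fun x => ‖pdx (pdx u) x t‖ ^ 2) := hv2.continuous.norm.pow 2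
  have c1 : Continuous (fun x => ‖pdx u x t‖ ^ 4) := hv1.continuous.norm.pow 4
  rw [← sub_eq_iff_eq_add, ← intervalIntegral.integral_sub (c2.intervalIntegrable _ _)
    (c1.intervalIntegrable _ _)]
  apply intervalIntegral.integral_congr_Ioo_of_le (zero_le_one)
  intro x hx
  have hx' := Ioo_subset_Icc_self hx
  have h := norm_sq_cross3 (u x t) (pdx (pdx u) x t)
  rw [hn x hx' t ht, k2 x hx, ← he x hx' t ht] at h
  simp only
  rw [h]; ring

end
end
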